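/- For every odd k ≥ 3, the following Parity-k-Flip game shows that the stretch bound k is tight: the game has k−1 players controlling variables x_1, ..., x_{k-1}, one frozen variable fixed to false, one unit-weight even parity clause over the variables x_1, ..., x_{k-1} and the frozen variable (satisfied iff the number of its variables with value true is even), and k−1 additional unit-weight odd parity clauses where the i-th such clause contains only x_i (satisfied iff x_i is true). In this game, the all-false state is a pure Nash equilibrium with potential 1, and the state in which all players play true is a pure Nash equilibrium with potential k. -/

import Mathlib

/-! In the witness game, player `i` meets exactly two clauses: the large even clause and her own
singleton clause, so her utility at `S` is `[even clause satisfied] + [S i]` (`tightGame_util`).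
Flipping any variable changes the parity of the number of true variables
(`odd_card_filter_update`). At the all-false state the even clause is satisfied, and a deviating
player trades it for her singleton clause, which leaves her utility at `1`. At the all-true state
the number of true variables is `k - 1`, which is even as `k` is odd, so all `k` clauses are
satisfied and no deviation can help. -/

/-- A `P_k`-Flip game: boolean variables `V`, player-controlled variables `N ⊆ V`
(variables outside `N` are frozen), and clauses `C` with nonnegative weights,
at most `k` variables each, satisfaction predicates depending only on their own
variables, and the flip property: an unsatisfied clause becomes satisfied when
any one of its variables is flipped. -/
structure PkFlipGame (V C : Type) [Fintype V] [DecidableEq V] [Fintype C] (k : ℕ) where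
  /-- the player-controlled variables -/
  N : Finset V
  /-- frozen values for the variables outside `N` -/
  frozen : V → Bool
  /-- clause weights -/
  w : C → ℝ
  w_nonneg : ∀ c, 0 ≤ w c
  /-- the variables of each clause -/
  vars : C → Finset V
  vars_card_le : ∀ c, (vars c).card ≤ k
  /-- the satisfaction predicate of each clause -/
  sat : C → (V → Bool) → Bool
  sat_depends : ∀ c (S S' : V → Bool), (∀ v ∈ vars c, S v = S' v) → sat c S = sat c S'
  flip_sat : ∀ c (S : V → Bool) (j : V), j ∈ vars c → sat c S = false →
    sat c (Function.update S j (!S j)) = true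

variable {V C : Type} [Fintype V] [DecidableEq V] [Fintype C] {k : ℕ}

/-- The state obtained from `S` by flipping the value of variable `j`. -/
def flipVar (S : V → Bool) (j : V) : V → Bool := Function.update S j (!S j)

namespace PkFlipGame

/-- A state of the game: agrees with the frozen values outside `N`. -/
def IsState (G : PkFlipGame V C k) (S : V → Bool) : Prop :=
  ∀ v, v ∉ G.N → S v = G.frozen v

/-- Utility of player `j`: total weight of satisfied clauses containing `j`'s variable. -/
def util (G : PkFlipGame V C k) (j : V) (S : V → Bool) : ℝ :=
  ∑ c ∈ Finset.univ.filter (fun c => j ∈ G.vars c ∧ G.sat c S = true), G.w c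

/-- The potential: total weight of satisfied clauses. -/
def potential (G : PkFlipGame V C k) (S : V → Bool) : ℝ :=
  ∑ c ∈ Finset.univ.filter (fun c => G.sat c S = true), G.w c

/-- Maximum possible utility `U_j` of player `j`: total weight of clauses containing `j`. -/
def maxUtil (G : PkFlipGame V C k) (j : V) : ℝ :=
  ∑ c ∈ Finset.univ.filter (fun c => j ∈ G.vars c), G.w c

/-- The subgame potential `Φ_R`: total weight of satisfied clauses containing a
variable of some player in `R`. -/
def subPotential (G : PkFlipGame V C k) (R : Finset V) (S : V → Bool) : ℝ :=
  ∑ c ∈ Finset.univ.filter (fun c => G.sat c S = true ∧ ∃ j ∈ R, j ∈ G.vars c), G.w c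

/-- A `ρ`-approximate pure Nash equilibrium: a state where no player can increase
her utility by more than a factor `ρ` by flipping her variable. -/
def IsApproxEquilibrium (G : PkFlipGame V C k) (ρ : ℝ) (S : V → Bool) : Prop :=
  G.IsState S ∧ ∀ j ∈ G.N, G.util j (flipVar S j) ≤ ρ * G.util j S

/-- A pure Nash equilibrium: no player can strictly increase her utility. -/
def IsPNE (G : PkFlipGame V C k) (S : V → Bool) : Prop :=
  G.IsState S ∧ ∀ j ∈ G.N, G.util j (flipVar S j) ≤ G.util j S

end PkFlipGame

/-- A `Parity`-`k`-Flip game: a `P_k`-Flip game whose clauses are parity clauses,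
each labeled odd or even; an odd (resp. even) clause is satisfied iff the number
of its variables with value true is odd (resp. even). -/
structure ParityFlipGame (V C : Type) [Fintype V] [DecidableEq V] [Fintype C] (k : ℕ)
    extends PkFlipGame V C k where
  /-- the parity label of each clause: `true` = odd, `false` = even -/
  isOdd : C → Bool
  sat_iff : ∀ c (S : V → Bool), sat c S = true ↔
    (Odd ((vars c).filter (fun v => S v = true)).card ↔ isOdd c = true)

/-- Flipping a variable of a clause switches the parity of its number of true variables. -/
theorem odd_card_filter_update {W : Type} [DecidableEq W] (A : Finset W) (S : W → Bool) (j : W)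
    (hj : j ∈ A) :
    Odd (A.filter (fun v => Function.update S j (!S j) v = true)).card ↔
      ¬ Odd (A.filter (fun v => S v = true)).card := by
  have hrest : (A.erase j).filter (fun v => Function.update S j (!S j) v = true) =
      (A.erase j).filter (fun v => S v = true) := by
    apply Finset.filter_congr
    intro v hv
    rw [Function.update_of_ne (Finset.ne_of_mem_erase hv)]
  rw [← Finset.insert_erase hj, Finset.filter_insert, Finset.filter_insert, hrest]
  cases h : S j <;> simp [Nat.odd_add_one]

/-- The variables of the clauses of the witness game: clause `none` contains all variables,
clause `some i` only the variable `some i`. -/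
def tightVars (n : ℕ) : Option (Fin n) → Finset (Option (Fin n))
  | none => Finset.univ
  | some i => {some i}

/-- The witness game for the tightness of the stretch bound. The clause `none` is even, the clauses
`some i` are odd, so that `Option.isSome` serves as the parity label. -/
def tightGame (k : ℕ) (hk : 3 ≤ k) :
    ParityFlipGame (Option (Fin (k - 1))) (Option (Fin (k - 1))) k where
  N := Finset.univ.erase none
  frozen := fun _ => false
  w := fun _ => 1
  w_nonneg := fun _ => zero_le_one
  vars := tightVars (k - 1)
  vars_card_le := by
    rintro (_ | i)
    · simp only [tightVars, Finset.card_univ, Fintype.card_option, Fintype.card_fin]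
      omega
    · simp only [tightVars, Finset.card_singleton]
      omega
  sat := fun c S =>
    decide (Odd ((tightVars (k - 1) c).filter (fun v => S v = true)).card ↔ c.isSome = true)
  sat_depends := by
    intro c S S' h
    have hfilter : (tightVars (k - 1) c).filter (fun v => S v = true) =
        (tightVars (k - 1) c).filter (fun v => S' v = true) :=
      Finset.filter_congr fun v hv => by rw [h v hv]
    rw [hfilter]
  flip_sat := by
    intro c S j hj h
    rw [decide_eq_false_iff_not] at h
    rw [decide_eq_true_iff, odd_card_filter_update _ _ _ hj]
    tauto
  isOdd := fun c => c.isSome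
  sat_iff := fun c S => decide_eq_true_iff

theorem tightGame_sat_none (k : ℕ) (hk : 3 ≤ k) (S : Option (Fin (k - 1)) → Bool) :
    (tightGame k hk).sat none S = true ↔
      ¬ Odd (Finset.univ.filter (fun v => S v = true)).card := by
  simp [tightGame, tightVars]

theorem tightGame_sat_some (k : ℕ) (hk : 3 ≤ k) (S : Option (Fin (k - 1)) → Bool)
    (i : Fin (k - 1)) :
    (tightGame k hk).sat (some i) S = true ↔ S (some i) = true := by
  cases h : S (some i) <;> simp [tightGame, tightVars, Finset.filter_singleton, h]

theorem tightGame_potential (k : ℕ) (hk : 3 ≤ k) (S : Option (Fin (k - 1)) → Bool) :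
    (tightGame k hk).potential S =
      (if Odd (Finset.univ.filter (fun v => S v = true)).card then 0 else 1) +
        ∑ i, if S (some i) = true then 1 else 0 := by
  rw [PkFlipGame.potential, Finset.sum_filter, Fintype.sum_option]
  simp only [tightGame_sat_none, tightGame_sat_some, ite_not]
  rfl

/-- Player `i` occurs only in the even clause and in her own singleton clause. -/
theorem tightGame_util (k : ℕ) (hk : 3 ≤ k) (S : Option (Fin (k - 1)) → Bool)
    (i : Fin (k - 1)) :
    (tightGame k hk).util (some i) S =
      (if Odd (Finset.univ.filter (fun v => S v = true)).card then 0 else 1) +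
        if S (some i) = true then 1 else 0 := by
  have hnone : some i ∈ (tightGame k hk).vars none := Finset.mem_univ _
  have hsome : ∀ l, some i ∈ (tightGame k hk).vars (some l) ↔ i = l := by
    intro l
    simp [tightGame, tightVars]
  have hw : ∀ c, (tightGame k hk).w c = 1 := fun _ => rfl
  rw [PkFlipGame.util, Finset.sum_filter, Fintype.sum_option]
  simp only [tightGame_sat_none, tightGame_sat_some, hnone, hsome, hw, true_and, ite_not, ite_and]
  rw [Finset.sum_ite_eq]
  simp

/-- Utility after a deviation: both clauses of the deviating player change their status. -/
theorem tightGame_util_flipVar (k : ℕ) (hk : 3 ≤ k) (S : Option (Fin (k - 1)) → Bool)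
    (i : Fin (k - 1)) :
    (tightGame k hk).util (some i) (flipVar S (some i)) =
      (if Odd (Finset.univ.filter (fun v => S v = true)).card then 1 else 0) +
        if S (some i) = true then 0 else 1 := by
  rw [tightGame_util]
  have hflip := odd_card_filter_update Finset.univ S (some i) (Finset.mem_univ _)
  have hval : flipVar S (some i) (some i) = !S (some i) := Function.update_self ..
  rw [hval]
  congr 1
  · by_cases h : Odd (Finset.univ.filter (fun v => S v = true)).card
    · rw [if_pos h]
      exact if_neg (fun h' => hflip.1 h' h)
    · rw [if_neg h]
      exact if_pos (hflip.2 h)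
  · cases S (some i) <;> rfl

/-- The number of true variables at the all-true state is `k - 1`, hence even. -/
theorem not_odd_card_isSome (k : ℕ) (hodd : Odd k) :
    ¬ Odd (Finset.univ.filter (fun v : Option (Fin (k - 1)) => v.isSome = true)).card := by
  have hcard : (Finset.univ.filter
      (fun v : Option (Fin (k - 1)) => v.isSome = true)).card = k - 1 := by
    rw [Finset.card_filter, Fintype.sum_option]
    simp
  rw [hcard, Nat.not_odd_iff_even]
  exact hodd.tsub_odd odd_one

/-- Tightness of the stretch bound `k` for `Parity`-`k`-Flip games with odd `k`:
for every odd `k ≥ 3` there is a `Parity`-`k`-Flip game with `k−1` players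
(`some i` for `i : Fin (k−1)`), one frozen variable `none` fixed to `false`, one
unit-weight even parity clause over all `k` variables, and `k−1` unit-weight odd
parity clauses, the `i`-th containing only the variable `some i`. The all-false
state is a pure Nash equilibrium with potential `1`, and the state where all
players play true is a pure Nash equilibrium with potential `k`. -/
theorem parity_stretch_tight (k : ℕ) (hk : 3 ≤ k) (hodd : Odd k) :
    ∃ G : ParityFlipGame (Option (Fin (k - 1))) (Option (Fin (k - 1))) k,
      G.toPkFlipGame.N = Finset.univ.erase none ∧
      G.toPkFlipGame.frozen none = false ∧
      (∀ c, G.toPkFlipGame.w c = 1) ∧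
      G.toPkFlipGame.vars none = Finset.univ ∧
      G.isOdd none = false ∧
      (∀ i, G.toPkFlipGame.vars (some i) = {some i}) ∧
      (∀ i, G.isOdd (some i) = true) ∧
      G.toPkFlipGame.IsPNE (fun _ => false) ∧
      G.toPkFlipGame.potential (fun _ => false) = 1 ∧
      G.toPkFlipGame.IsPNE (fun v => v.isSome) ∧
      G.toPkFlipGame.potential (fun v => v.isSome) = (k : ℝ) := by
  have htrue := not_odd_card_isSome k hodd
  refine ⟨tightGame k hk, rfl, rfl, fun _ => rfl, rfl, rfl, fun _ => rfl, fun _ => rfl,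
    ⟨fun _ _ => rfl, ?_⟩, ?_, ⟨?_, ?_⟩, ?_⟩
  · rintro (_ | i) hj
    · exact absurd rfl (Finset.ne_of_mem_erase hj)
    · rw [tightGame_util_flipVar, tightGame_util]
      simp
  · rw [tightGame_potential]
    simp
  · rintro (_ | i) hv
    · rfl
    · exact absurd (Finset.mem_erase.2 ⟨Option.some_ne_none i, Finset.mem_univ _⟩) hv
  · rintro (_ | i) hj
    · exact absurd rfl (Finset.ne_of_mem_erase hj)
    · rw [tightGame_util_flipVar, tightGame_util, if_neg htrue, if_neg htrue]
      norm_num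
  · rw [tightGame_potential, if_neg htrue]
    have hk1 : 1 ≤ k := by omega
    simp [Nat.cast_sub hk1]
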